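/- arXiv:1307.0363 — 3 statements merged into one kernel-verified Lean document; each statement's English description precedes it below -/
import Mathlib

section
/- Quantum data-processing inequality: for every state ρ_RQ on H_R⊗H_Q (finite-dimensional) and every CPTP map 𝓔 : L(H_Q) → L(H_{Q'}), setting σ_{RQ'} = (id_R⊗𝓔)(ρ_RQ), one has I(R;Q)_ρ ≥ I(R;Q')_σ. -/
open Matrix Kronecker ComplexOrder

noncomputable section

/-- Von Neumann entropy `S(ρ) = -Tr[ρ log ρ]`, computed from the eigenvalues
(junk value `0` if `ρ` is not Hermitian). -/
def vnEntropy {n : Type*} [Fintype n] [DecidableEq n] (ρ : Matrix n n ℂ) : ℝ :=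
  if h : ρ.IsHermitian then ∑ i, Real.negMulLog (h.eigenvalues i) else 0

/-- Partial trace over the first tensor factor. -/
def ptraceLeft {A B : Type*} [Fintype A] (M : Matrix (A × B) (A × B) ℂ) : Matrix B B ℂ :=
  Matrix.of fun x y => ∑ a, M (a, x) (a, y)

/-- Partial trace over the second tensor factor. -/
def ptraceRight {A B : Type*} [Fintype B] (M : Matrix (A × B) (A × B) ℂ) : Matrix A A ℂ :=
  Matrix.of fun x y => ∑ b, M (x, b) (y, b)

/-- Partial trace over the last factor of a tripartite operator on `R ⊗ Q ⊗ E`. -/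
def ptrace3E {R Q E : Type*} [Fintype E] (M : Matrix (R × Q × E) (R × Q × E) ℂ) :
    Matrix (R × Q) (R × Q) ℂ :=
  Matrix.of fun x y => ∑ e, M (x.1, x.2, e) (y.1, y.2, e)

/-- A state is a positive semidefinite operator with unit trace. -/
def IsState {n : Type*} [Fintype n] (ρ : Matrix n n ℂ) : Prop :=
  ρ.PosSemidef ∧ ρ.trace = 1

/-- Quantum mutual information `I(A;B) = S(ρ_A) + S(ρ_B) - S(ρ_AB)`. -/
def mutualInfo {A B : Type*} [Fintype A] [DecidableEq A] [Fintype B] [DecidableEq B]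
    (ρ : Matrix (A × B) (A × B) ℂ) : ℝ :=
  vnEntropy (ptraceRight ρ) + vnEntropy (ptraceLeft ρ) - vnEntropy ρ

/-- Conditional quantum mutual information
`I(R;E|Q) = S(ρ_RQ) + S(ρ_QE) - S(ρ_RQE) - S(ρ_Q)`. -/
def condMutualInfo {R Q E : Type*} [Fintype R] [DecidableEq R] [Fintype Q] [DecidableEq Q]
    [Fintype E] [DecidableEq E] (ρ : Matrix (R × Q × E) (R × Q × E) ℂ) : ℝ :=
  vnEntropy (ptrace3E ρ) + vnEntropy (ptraceLeft ρ) - vnEntropy ρ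
    - vnEntropy (ptraceLeft (ptrace3E ρ))

/-- The map `id_n ⊗ Φ` obtained by applying `Φ` blockwise. -/
def idTensor {A B : Type*} (n : Type*) (Φ : Matrix A A ℂ →ₗ[ℂ] Matrix B B ℂ)
    (M : Matrix (n × A) (n × A) ℂ) : Matrix (n × B) (n × B) ℂ :=
  Matrix.of fun x y => Φ (Matrix.of fun a b => M (x.1, a) (y.1, b)) x.2 y.2

/-- Complete positivity: for every `k`, `id_{Fin k} ⊗ Φ` preserves positive semidefiniteness. -/
def IsCPMap {A B : Type*} [Fintype A] [Fintype B]
    (Φ : Matrix A A ℂ →ₗ[ℂ] Matrix B B ℂ) : Prop :=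
  ∀ (k : ℕ) (M : Matrix (Fin k × A) (Fin k × A) ℂ), M.PosSemidef →
    (idTensor (Fin k) Φ M).PosSemidef

/-- A CPTP map (quantum channel). -/
def IsCPTP {A B : Type*} [Fintype A] [Fintype B]
    (Φ : Matrix A A ℂ →ₗ[ℂ] Matrix B B ℂ) : Prop :=
  IsCPMap Φ ∧ ∀ M : Matrix A A ℂ, (Φ M).trace = M.trace

/-- The family of states on `Q ⊗ E` steered from `R` by measurements on a tripartite state. -/
def steered {R Q E : Type*} [Fintype R] [Fintype Q] [DecidableEq Q] [Fintype E] [DecidableEq E]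
    (ρ : Matrix (R × Q × E) (R × Q × E) ℂ) : Set (Matrix (Q × E) (Q × E) ℂ) :=
  { ω | ∃ P : Matrix R R ℂ, P.PosSemidef ∧
      (ptraceLeft ((P ⊗ₖ (1 : Matrix (Q × E) (Q × E) ℂ)) * ρ)).trace ≠ 0 ∧
      ω = ((ptraceLeft ((P ⊗ₖ (1 : Matrix (Q × E) (Q × E) ℂ)) * ρ)).trace)⁻¹ •
            ptraceLeft ((P ⊗ₖ (1 : Matrix (Q × E) (Q × E) ℂ)) * ρ) }

/-- A post-selected family of bipartite system-environment states: the normalized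
output state space of some completely positive map `𝒫 : Q₀E₀ → QE`. -/
def IsPostSelected {Q E : Type*} [Fintype Q] [Fintype E]
    (S : Set (Matrix (Q × E) (Q × E) ℂ)) : Prop :=
  ∃ (n0 m0 : ℕ)
    (P : Matrix (Fin n0 × Fin m0) (Fin n0 × Fin m0) ℂ →ₗ[ℂ] Matrix (Q × E) (Q × E) ℂ),
    IsCPMap P ∧
    S = { ω | ∃ ρ0, IsState ρ0 ∧ (P ρ0).trace ≠ 0 ∧ ω = ((P ρ0).trace)⁻¹ • P ρ0 }

lemma tendsto_sum_mul_log_sub {ι : Type*} [Fintype ι] (w p q : ι → ℝ) (hp : ∀ i, 0 ≤ p i)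
    (hpw : ∀ i, p i = 0 → w i = 0) :
    Filter.Tendsto (fun t : ℝ => ∑ i, w i * (Real.log (q i / t + p i) - Real.log (q i)))
      Filter.atTop (nhds (∑ i, w i * (Real.log (p i) - Real.log (q i)))) := by
  refine tendsto_finsetSum _ fun i _ => ?_
  rcases (hp i).eq_or_lt with h | h
  · simp [hpw i h.symm]
  · refine Filter.Tendsto.const_mul _ (Filter.Tendsto.sub_const ?_ _)
    refine Filter.Tendsto.log ?_ h.ne'
    simpa using (Filter.Tendsto.const_div_atTop Filter.tendsto_id (q i)).add_const (p i)

lemma hasDerivAt_sum_mul_log {ι : Type*} [Fintype ι] (w p q : ι → ℝ) (hp : ∀ i, 0 ≤ p i)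
    (hq : ∀ i, 0 ≤ q i) (hqw : ∀ i, q i = 0 → w i = 0) {t : ℝ} (ht : 0 ≤ t) :
    HasDerivAt (fun t : ℝ => ∑ i, w i * (Real.log (q i + t * p i) - Real.log (q i)))
      (∑ i, w i * (p i / (q i + t * p i))) t := by
  refine HasDerivAt.fun_sum fun i _ => ?_
  rcases (hq i).eq_or_lt with h | h
  · simpa [hqw i h.symm] using hasDerivAt_const t (0 : ℝ)
  · refine HasDerivAt.const_mul _ (HasDerivAt.sub_const _ ?_)
    have hpos : q i + t * p i ≠ 0 := (add_pos_of_pos_of_nonneg h (mul_nonneg ht (hp i))).ne'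
    simpa using (((hasDerivAt_id t).mul_const (p i)).const_add (q i)).log hpos

lemma sum_mul_log_rescale {ι : Type*} [Fintype ι] (w p q : ι → ℝ) (hp : ∀ i, 0 ≤ p i)
    (hq : ∀ i, 0 ≤ q i) (hpw : ∀ i, p i = 0 → w i = 0) {t : ℝ} (ht : 0 < t) :
    ∑ i, w i * (Real.log (q i + t * p i) - Real.log (q i)) =
      ∑ i, w i * (Real.log (q i / t + p i) - Real.log (q i)) + Real.log t * ∑ i, w i := by
  rw [Finset.mul_sum, ← Finset.sum_add_distrib]
  refine Finset.sum_congr rfl fun i _ => ?_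
  rcases (hp i).eq_or_lt with h | h
  · simp [hpw i h.symm]
  · have hpos : 0 < q i / t + p i := add_pos_of_nonneg_of_pos (div_nonneg (hq i) ht.le) h
    have : q i + t * p i = t * (q i / t + p i) := by field_simp
    rw [this, Real.log_mul ht.ne' hpos.ne']
    ring

/-- The integral representation of the logarithm, in differentiated form: an inequality between
the resolvent sums for every `t > 0` yields the inequality between the logarithmic sums. -/
lemma sum_mul_log_sub_le_of_resolvent_le {ι κ : Type*} [Fintype ι] [Fintype κ]
    (w p q : ι → ℝ) (w' p' q' : κ → ℝ)
    (hp : ∀ i, 0 ≤ p i) (hq : ∀ i, 0 ≤ q i)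
    (hpw : ∀ i, p i = 0 → w i = 0) (hqw : ∀ i, q i = 0 → w i = 0)
    (hp' : ∀ i, 0 ≤ p' i) (hq' : ∀ i, 0 ≤ q' i)
    (hpw' : ∀ i, p' i = 0 → w' i = 0) (hqw' : ∀ i, q' i = 0 → w' i = 0)
    (hsum : ∑ i, w' i = ∑ i, w i)
    (hle : ∀ t : ℝ, 0 < t →
      ∑ i, w' i * (p' i / (q' i + t * p' i)) ≤ ∑ i, w i * (p i / (q i + t * p i))) :
    ∑ i, w' i * (Real.log (p' i) - Real.log (q' i)) ≤
      ∑ i, w i * (Real.log (p i) - Real.log (q i)) := by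
  have hderiv : ∀ t : ℝ, 0 ≤ t → HasDerivAt
      (fun t : ℝ => (∑ i, w i * (Real.log (q i + t * p i) - Real.log (q i))) -
        ∑ i, w' i * (Real.log (q' i + t * p' i) - Real.log (q' i)))
      ((∑ i, w i * (p i / (q i + t * p i))) - ∑ i, w' i * (p' i / (q' i + t * p' i))) t :=
    fun t ht => (hasDerivAt_sum_mul_log w p q hp hq hqw ht).sub
      (hasDerivAt_sum_mul_log w' p' q' hp' hq' hqw' ht)
  have hmono := monotoneOn_of_deriv_nonneg (convex_Ici (0 : ℝ))
    (fun t ht => (hderiv t ht).continuousAt.continuousWithinAt)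
    (fun t ht => (hderiv t (interior_subset ht)).differentiableAt.differentiableWithinAt)
    (fun t ht => by
      rw [(hderiv t (interior_subset ht)).deriv, sub_nonneg]
      exact hle t (by simpa using ht))
  refine le_of_tendsto_of_tendsto (tendsto_sum_mul_log_sub w' p' q' hp' hpw')
    (tendsto_sum_mul_log_sub w p q hp hpw) ?_
  filter_upwards [Filter.eventually_gt_atTop 0] with t ht
  have h := hmono (Set.self_mem_Ici) (Set.mem_Ici.2 ht.le) ht.le
  simp only [zero_mul, add_zero, sub_self, mul_zero, Finset.sum_const_zero] at h
  rw [sum_mul_log_rescale w p q hp hq hpw ht, sum_mul_log_rescale w' p' q' hp' hq' hpw' ht,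
    hsum] at h
  linarith

/-- The quadratic functional whose supremum over `X` is the resolvent sum of the pair `ρ, σ`. -/
def resolventFunctional {n : Type*} [Fintype n] (ρ σ : Matrix n n ℂ) (t : ℝ)
    (X : Matrix n n ℂ) : ℝ :=
  2 * (Xᴴ * ρ).trace.re - (Xᴴ * σ * X).trace.re - t * (X * ρ * Xᴴ).trace.re

lemma resolventFunctional_conj {n : Type*} [Fintype n] [DecidableEq n] (U V x : Matrix n n ℂ)
    (p q : n → ℝ) (hU : Uᴴ * U = 1) (hV : Vᴴ * V = 1) (t : ℝ) :
    resolventFunctional (U * diagonal (fun i => (p i : ℂ)) * Uᴴ)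
      (V * diagonal (fun i => (q i : ℂ)) * Vᴴ) t (V * x * Uᴴ) =
    ∑ i, ∑ j, (2 * p i * (star (x j i) * (Vᴴ * U) j i).re -
      (q j + t * p i) * ‖x j i‖ ^ 2) := by
  have h1 : ((V * x * Uᴴ)ᴴ * (U * diagonal (fun i => (p i : ℂ)) * Uᴴ)).trace =
      (xᴴ * (Vᴴ * U) * diagonal (fun i => (p i : ℂ))).trace := by
    calc _ = (U * (xᴴ * Vᴴ * U * diagonal (fun i => (p i : ℂ)) * Uᴴ)).trace := by
            simp only [conjTranspose_mul, conjTranspose_conjTranspose, Matrix.mul_assoc]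
      _ = (xᴴ * (Vᴴ * U) * diagonal (fun i => (p i : ℂ)) * (Uᴴ * U)).trace := by
            rw [trace_mul_comm]; simp only [Matrix.mul_assoc]
      _ = _ := by rw [hU, Matrix.mul_one]
  have h2 : ((V * x * Uᴴ)ᴴ * (V * diagonal (fun i => (q i : ℂ)) * Vᴴ) * (V * x * Uᴴ)).trace =
      (xᴴ * diagonal (fun i => (q i : ℂ)) * x).trace := by
    calc _ = (U * (xᴴ * (Vᴴ * V) * diagonal (fun i => (q i : ℂ)) * (Vᴴ * V) * x * Uᴴ)).trace := by
            simp only [conjTranspose_mul, conjTranspose_conjTranspose, Matrix.mul_assoc]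
      _ = (xᴴ * diagonal (fun i => (q i : ℂ)) * x * (Uᴴ * U)).trace := by
            rw [trace_mul_comm, hV]; simp only [Matrix.mul_assoc, Matrix.one_mul]
      _ = _ := by rw [hU, Matrix.mul_one]
  have h3 : (V * x * Uᴴ * (U * diagonal (fun i => (p i : ℂ)) * Uᴴ) * (V * x * Uᴴ)ᴴ).trace =
      (x * diagonal (fun i => (p i : ℂ)) * xᴴ).trace := by
    calc _ = (V * (x * (Uᴴ * U) * diagonal (fun i => (p i : ℂ)) * (Uᴴ * U) * xᴴ * Vᴴ)).trace := by
            simp only [conjTranspose_mul, conjTranspose_conjTranspose, Matrix.mul_assoc]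
      _ = (x * diagonal (fun i => (p i : ℂ)) * xᴴ * (Vᴴ * V)).trace := by
            rw [trace_mul_comm, hU]; simp only [Matrix.mul_assoc, Matrix.one_mul]
      _ = _ := by rw [hV, Matrix.mul_one]
  have e1 : (xᴴ * (Vᴴ * U) * diagonal (fun i => (p i : ℂ))).trace.re =
      ∑ i, ∑ j, p i * (star (x j i) * (Vᴴ * U) j i).re := by
    rw [trace, Complex.re_sum]
    refine Finset.sum_congr rfl fun i _ => ?_
    rw [diag_apply, mul_diagonal, Complex.re_mul_ofReal, Matrix.mul_apply, Complex.re_sum,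
      Finset.sum_mul]
    exact Finset.sum_congr rfl fun j _ => mul_comm _ _
  have e2 : (xᴴ * diagonal (fun i => (q i : ℂ)) * x).trace.re =
      ∑ i, ∑ j, q j * ‖x j i‖ ^ 2 := by
    rw [trace, Complex.re_sum]
    refine Finset.sum_congr rfl fun i _ => ?_
    rw [diag_apply, Matrix.mul_apply, Complex.re_sum]
    refine Finset.sum_congr rfl fun j _ => ?_
    rw [mul_diagonal, conjTranspose_apply, ← Complex.normSq_eq_norm_sq, Complex.normSq_apply]
    simp; ring
  have e3 : (x * diagonal (fun i => (p i : ℂ)) * xᴴ).trace.re =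
      ∑ i, ∑ j, p i * ‖x j i‖ ^ 2 := by
    rw [trace, Complex.re_sum, Finset.sum_comm]
    refine Finset.sum_congr rfl fun i _ => ?_
    rw [diag_apply, Matrix.mul_apply, Complex.re_sum]
    refine Finset.sum_congr rfl fun j _ => ?_
    rw [mul_diagonal, conjTranspose_apply, ← Complex.normSq_eq_norm_sq, Complex.normSq_apply]
    simp; ring
  rw [resolventFunctional, h1, h2, h3, e1, e2, e3]
  simp only [Finset.mul_sum, ← Finset.sum_sub_distrib]
  exact Finset.sum_congr rfl fun i _ => Finset.sum_congr rfl fun j _ => by ring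

lemma resolventFunctional_le {n : Type*} [Fintype n] [DecidableEq n] (U V X : Matrix n n ℂ)
    (p q : n → ℝ) (hU : Uᴴ * U = 1) (hV : Vᴴ * V = 1)
    (hp : ∀ i, 0 ≤ p i) (hq : ∀ i, 0 ≤ q i) {t : ℝ} (ht : 0 < t) :
    resolventFunctional (U * diagonal (fun i => (p i : ℂ)) * Uᴴ)
      (V * diagonal (fun i => (q i : ℂ)) * Vᴴ) t X ≤
    ∑ i, ∑ j, ‖(Vᴴ * U) j i‖ ^ 2 * p i * (p i / (q j + t * p i)) := by
  have hX : X = V * (Vᴴ * X * U) * Uᴴ := by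
    calc X = (V * Vᴴ) * X * (U * Uᴴ) := by
            rw [mul_eq_one_comm.1 hU, mul_eq_one_comm.1 hV, Matrix.one_mul, Matrix.mul_one]
      _ = _ := by simp only [Matrix.mul_assoc]
  rw [hX, resolventFunctional_conj U V _ p q hU hV]
  refine Finset.sum_le_sum fun i _ => Finset.sum_le_sum fun j _ => ?_
  generalize (Vᴴ * X * U) j i = x
  generalize (Vᴴ * U) j i = g
  have hre : (star x * g).re ≤ ‖x‖ * ‖g‖ := by
    simpa using Complex.re_le_norm (star x * g)
  rcases (hp i).eq_or_lt with h | h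
  · simp only [← h]
    have := mul_nonneg (hq j) (sq_nonneg ‖x‖)
    simp; linarith
  · have hpos : 0 < q j + t * p i := add_pos_of_nonneg_of_pos (hq j) (mul_pos ht h)
    have hsq : ‖g‖ ^ 2 * p i * (p i / (q j + t * p i)) =
        2 * p i * (‖x‖ * ‖g‖) - (q j + t * p i) * ‖x‖ ^ 2 +
          (p i * ‖g‖ - (q j + t * p i) * ‖x‖) ^ 2 / (q j + t * p i) := by
      have hne := hpos.ne'
      generalize q j + t * p i = d at hne ⊢
      field_simp; ring
    have h2 := mul_le_mul_of_nonneg_left hre (mul_nonneg zero_le_two h.le)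
    have h3 : 0 ≤ (p i * ‖g‖ - (q j + t * p i) * ‖x‖) ^ 2 / (q j + t * p i) := by positivity
    linarith

lemma exists_resolventFunctional_eq {n : Type*} [Fintype n] [DecidableEq n] (U V : Matrix n n ℂ)
    (p q : n → ℝ) (hU : Uᴴ * U = 1) (hV : Vᴴ * V = 1)
    (hp : ∀ i, 0 ≤ p i) (hq : ∀ i, 0 ≤ q i) {t : ℝ} (ht : 0 < t) :
    ∃ X, resolventFunctional (U * diagonal (fun i => (p i : ℂ)) * Uᴴ)
      (V * diagonal (fun i => (q i : ℂ)) * Vᴴ) t X =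
    ∑ i, ∑ j, ‖(Vᴴ * U) j i‖ ^ 2 * p i * (p i / (q j + t * p i)) := by
  refine ⟨V * (Matrix.of fun j i => ((p i / (q j + t * p i) : ℝ) : ℂ) * (Vᴴ * U) j i) * Uᴴ, ?_⟩
  rw [resolventFunctional_conj U V _ p q hU hV]
  refine Finset.sum_congr rfl fun i _ => Finset.sum_congr rfl fun j _ => ?_
  rw [of_apply]
  generalize (Vᴴ * U) j i = g
  have hre : (star (((p i / (q j + t * p i) : ℝ) : ℂ) * g) * g).re =
      p i / (q j + t * p i) * ‖g‖ ^ 2 := by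
    generalize p i / (q j + t * p i) = c
    rw [← Complex.normSq_eq_norm_sq, Complex.normSq_apply]
    simp; ring
  rw [hre, norm_mul, Complex.norm_real, mul_pow, Real.norm_eq_abs, sq_abs]
  rcases (hp i).eq_or_lt with h | h
  · simp [← h]
  · have hpos : 0 < q j + t * p i := add_pos_of_nonneg_of_pos (hq j) (mul_pos ht h)
    field_simp
    ring

/-- The completely positive map with Kraus operators `L k`. -/
def krausMap {κ m n : Type*} [Fintype κ] [Fintype n] (L : κ → Matrix m n ℂ)
    (X : Matrix n n ℂ) : Matrix m m ℂ :=
  ∑ k, L k * X * (L k)ᴴ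

/-- The adjoint of `krausMap L` with respect to the trace inner product. -/
def krausAdjoint {κ m n : Type*} [Fintype κ] [Fintype m] (L : κ → Matrix m n ℂ)
    (Y : Matrix m m ℂ) : Matrix n n ℂ :=
  ∑ k, (L k)ᴴ * Y * L k

lemma krausAdjoint_conjTranspose {κ m n : Type*} [Fintype κ] [Fintype m]
    (L : κ → Matrix m n ℂ) (Y : Matrix m m ℂ) :
    (krausAdjoint L Y)ᴴ = krausAdjoint L Yᴴ := by
  simp [krausAdjoint, conjTranspose_sum, Matrix.mul_assoc]

lemma trace_krausAdjoint_mul {κ m n : Type*} [Fintype κ] [Fintype m] [Fintype n]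
    (L : κ → Matrix m n ℂ) (Y : Matrix m m ℂ) (X : Matrix n n ℂ) :
    (krausAdjoint L Y * X).trace = (Y * krausMap L X).trace := by
  simp only [krausAdjoint, krausMap, Finset.sum_mul, Finset.mul_sum, trace_sum]
  refine Finset.sum_congr rfl fun k _ => ?_
  rw [Matrix.mul_assoc, Matrix.mul_assoc, trace_mul_comm]
  simp only [Matrix.mul_assoc]

/-- **Kadison–Schwarz inequality** for the adjoint of a trace-preserving Kraus map. -/
lemma posSemidef_krausAdjoint_sub {κ m n : Type*} [Fintype κ] [Fintype m] [Fintype n]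
    [DecidableEq n] (L : κ → Matrix m n ℂ) (hL : ∑ k, (L k)ᴴ * L k = 1) (Y : Matrix m m ℂ) :
    (krausAdjoint L (Y * Yᴴ) - krausAdjoint L Y * (krausAdjoint L Y)ᴴ).PosSemidef := by
  set X := krausAdjoint L Y with hX
  have key : krausAdjoint L (Y * Yᴴ) - X * Xᴴ =
      ∑ k, ((L k)ᴴ * Y - X * (L k)ᴴ) * ((L k)ᴴ * Y - X * (L k)ᴴ)ᴴ := by
    have expand : ∀ k, ((L k)ᴴ * Y - X * (L k)ᴴ) * ((L k)ᴴ * Y - X * (L k)ᴴ)ᴴ =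
        (L k)ᴴ * (Y * Yᴴ) * L k - ((L k)ᴴ * Y * L k) * Xᴴ - X * ((L k)ᴴ * Yᴴ * L k)
          + X * ((L k)ᴴ * L k) * Xᴴ := by
      intro k
      simp only [conjTranspose_sub, conjTranspose_mul, conjTranspose_conjTranspose,
        Matrix.sub_mul, Matrix.mul_sub, Matrix.mul_assoc]
      abel
    simp only [expand, Finset.sum_add_distrib, Finset.sum_sub_distrib, ← Finset.mul_sum,
      ← Finset.sum_mul, hL]
    have hX' : ∑ k, (L k)ᴴ * Yᴴ * L k = Xᴴ := by rw [hX, krausAdjoint_conjTranspose]; rfl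
    rw [hX', show ∑ k, (L k)ᴴ * Y * L k = X from rfl, Matrix.mul_one]
    simp [krausAdjoint]
  rw [key]
  exact posSemidef_sum _ fun k _ => posSemidef_self_mul_conjTranspose _

open scoped MatrixOrder in
lemma Matrix.PosSemidef.exists_eq_conjTranspose_mul_self {n : Type*} [Fintype n] {A : Matrix n n ℂ}
    (hA : A.PosSemidef) : ∃ B : Matrix n n ℂ, A = Bᴴ * B := by
  classical
  exact CStarAlgebra.nonneg_iff_eq_star_mul_self.1 hA.nonneg

lemma re_trace_mul_nonneg {n : Type*} [Fintype n] {A B : Matrix n n ℂ}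
    (hA : A.PosSemidef) (hB : B.PosSemidef) : 0 ≤ (A * B).trace.re := by
  obtain ⟨C, rfl⟩ := PosSemidef.exists_eq_conjTranspose_mul_self hA
  rw [Matrix.mul_assoc, trace_mul_comm]
  exact (Complex.le_def.1 (hB.mul_mul_conjTranspose_same C).trace_nonneg).1

lemma resolventFunctional_krausMap_le {κ m n : Type*} [Fintype κ] [Fintype m] [Fintype n]
    [DecidableEq n] (L : κ → Matrix m n ℂ) (hL : ∑ k, (L k)ᴴ * L k = 1)
    {ρ σ : Matrix n n ℂ} (hρ : ρ.PosSemidef) (hσ : σ.PosSemidef) {t : ℝ} (ht : 0 ≤ t)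
    (Y : Matrix m m ℂ) :
    resolventFunctional (krausMap L ρ) (krausMap L σ) t Y ≤
      resolventFunctional ρ σ t (krausAdjoint L Y) := by
  have h1 : ((krausAdjoint L Y)ᴴ * ρ).trace = (Yᴴ * krausMap L ρ).trace := by
    rw [krausAdjoint_conjTranspose, trace_krausAdjoint_mul]
  have h2 : ((krausAdjoint L Y)ᴴ * σ * krausAdjoint L Y).trace.re ≤
      (Yᴴ * krausMap L σ * Y).trace.re := by
    have := re_trace_mul_nonneg (posSemidef_krausAdjoint_sub L hL Y) hσ
    rw [Matrix.sub_mul, trace_sub, trace_krausAdjoint_mul, Complex.sub_re, sub_nonneg] at this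
    rw [trace_mul_comm, ← Matrix.mul_assoc, trace_mul_comm _ Y, ← Matrix.mul_assoc]
    exact this
  have h3 : (krausAdjoint L Y * ρ * (krausAdjoint L Y)ᴴ).trace.re ≤
      (Y * krausMap L ρ * Yᴴ).trace.re := by
    have := re_trace_mul_nonneg (posSemidef_krausAdjoint_sub L hL Yᴴ) hρ
    rw [Matrix.sub_mul, trace_sub, trace_krausAdjoint_mul, Complex.sub_re, sub_nonneg,
      ← krausAdjoint_conjTranspose, conjTranspose_conjTranspose, conjTranspose_conjTranspose]
      at this
    rw [trace_mul_comm, ← Matrix.mul_assoc, trace_mul_comm _ Yᴴ, ← Matrix.mul_assoc]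
    exact this
  have := mul_le_mul_of_nonneg_left h3 ht
  rw [resolventFunctional, resolventFunctional, h1]
  linarith

lemma Matrix.PosSemidef.exists_spectral {n : Type*} [Fintype n] [DecidableEq n] {A : Matrix n n ℂ}
    (hA : A.PosSemidef) :
    ∃ (U : Matrix n n ℂ) (p : n → ℝ), Uᴴ * U = 1 ∧ (∀ i, 0 ≤ p i) ∧
      A = U * diagonal (fun i => (p i : ℂ)) * Uᴴ ∧ vnEntropy A = ∑ i, Real.negMulLog (p i) := by
  refine ⟨hA.1.eigenvectorUnitary, hA.1.eigenvalues, ?_, hA.eigenvalues_nonneg, ?_, ?_⟩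
  · exact Unitary.coe_star_mul_self hA.1.eigenvectorUnitary
  · exact hA.1.spectral_theorem
  · rw [vnEntropy, dif_pos hA.1]

lemma sum_norm_sq_col_eq_one {n : Type*} [Fintype n] [DecidableEq n] {G : Matrix n n ℂ}
    (hG : Gᴴ * G = 1) (i : n) : ∑ j, ‖G j i‖ ^ 2 = 1 := by
  have h := congrArg Complex.re (congrFun (congrFun hG i) i)
  rw [Matrix.mul_apply, one_apply_eq, Complex.one_re, Complex.re_sum] at h
  rw [← h]
  refine Finset.sum_congr rfl fun j _ => ?_
  rw [conjTranspose_apply, ← Complex.normSq_eq_norm_sq, Complex.normSq_apply]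
  simp

lemma sum_norm_sq_mul_eq {n : Type*} [Fintype n] [DecidableEq n] (U V : Matrix n n ℂ)
    (p : n → ℝ) (j : n) :
    ∑ i, ‖(Vᴴ * U) j i‖ ^ 2 * p i =
      ((Vᴴ * (U * diagonal (fun i => (p i : ℂ)) * Uᴴ) * V) j j).re := by
  have h : Vᴴ * (U * diagonal (fun i => (p i : ℂ)) * Uᴴ) * V =
      (Vᴴ * U) * diagonal (fun i => (p i : ℂ)) * (Vᴴ * U)ᴴ := by
    simp only [conjTranspose_mul, conjTranspose_conjTranspose, Matrix.mul_assoc]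
  rw [h, Matrix.mul_apply, Complex.re_sum]
  refine Finset.sum_congr rfl fun i _ => ?_
  rw [mul_diagonal, conjTranspose_apply, ← Complex.normSq_eq_norm_sq, Complex.normSq_apply]
  simp; ring

lemma ptraceLeft_posSemidef {A B : Type*} [Fintype A] [Fintype B]
    {M : Matrix (A × B) (A × B) ℂ} (hM : M.PosSemidef) : (ptraceLeft M).PosSemidef := by
  have : ptraceLeft M = ∑ a, M.submatrix (fun b => (a, b)) (fun b => (a, b)) := by
    ext x y
    simp [ptraceLeft, Matrix.sum_apply]
  rw [this]
  exact posSemidef_sum _ fun a _ => hM.submatrix _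

lemma ptraceLeft_conj_one_kronecker {A B : Type*} [Fintype A] [DecidableEq A] [Fintype B]
    (W : Matrix B B ℂ) (M : Matrix (A × B) (A × B) ℂ) :
    ptraceLeft (((1 : Matrix A A ℂ) ⊗ₖ W)ᴴ * M * ((1 : Matrix A A ℂ) ⊗ₖ W)) =
      Wᴴ * ptraceLeft M * W := by
  ext x y
  simp only [ptraceLeft, of_apply, Matrix.mul_apply, conjTranspose_apply, kroneckerMap_apply,
    Fintype.sum_prod_type, one_apply, ite_mul, one_mul, zero_mul, mul_ite, mul_zero,
    apply_ite star, star_zero, Finset.sum_ite_irrel, Finset.sum_const_zero,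
    Finset.sum_ite_eq', Finset.mem_univ, if_true, Finset.mul_sum, Finset.sum_mul]
  rw [Finset.sum_comm]
  refine Finset.sum_congr rfl fun _ _ => ?_
  rw [Finset.sum_comm]

/-- Spectral decompositions of `ρ` and `1 ⊗ ρ_B`, in terms of which the relative entropy
of `ρ` with respect to `1 ⊗ ρ_B` equals `S(ρ_B) - S(ρ)`. -/
lemma exists_spectral_pair {A B : Type*} [Fintype A] [DecidableEq A] [Fintype B] [DecidableEq B]
    {ρ : Matrix (A × B) (A × B) ℂ} (hρ : ρ.PosSemidef) :
    ∃ (U V : Matrix (A × B) (A × B) ℂ) (p q : A × B → ℝ),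
      Uᴴ * U = 1 ∧ Vᴴ * V = 1 ∧ (∀ i, 0 ≤ p i) ∧ (∀ j, 0 ≤ q j) ∧
      ρ = U * diagonal (fun i => (p i : ℂ)) * Uᴴ ∧
      (1 : Matrix A A ℂ) ⊗ₖ ptraceLeft ρ = V * diagonal (fun j => (q j : ℂ)) * Vᴴ ∧
      (∀ i j, q j = 0 → ‖(Vᴴ * U) j i‖ ^ 2 * p i = 0) ∧
      ∑ i, ∑ j, ‖(Vᴴ * U) j i‖ ^ 2 * p i = ρ.trace.re ∧
      ∑ i, ∑ j, ‖(Vᴴ * U) j i‖ ^ 2 * p i * (Real.log (p i) - Real.log (q j)) =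
        vnEntropy (ptraceLeft ρ) - vnEntropy ρ := by
  obtain ⟨U, p, hU, hp, hρU, hS⟩ := PosSemidef.exists_spectral hρ
  obtain ⟨W, r, hW, hr, hρW, hSB⟩ := PosSemidef.exists_spectral (ptraceLeft_posSemidef hρ)
  set V : Matrix (A × B) (A × B) ℂ := (1 : Matrix A A ℂ) ⊗ₖ W with hVdef
  have hV : Vᴴ * V = 1 := by
    rw [hVdef, conjTranspose_kronecker, ← mul_kronecker_mul, hW]
    simp
  have hG : (Vᴴ * U)ᴴ * (Vᴴ * U) = 1 := by
    calc _ = Uᴴ * (V * Vᴴ) * U := by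
            simp only [conjTranspose_mul, conjTranspose_conjTranspose, Matrix.mul_assoc]
      _ = 1 := by rw [mul_eq_one_comm.1 hV, Matrix.mul_one, hU]
  have hcol : ∀ i, ∑ j, ‖(Vᴴ * U) j i‖ ^ 2 * p i = p i := fun i => by
    rw [← Finset.sum_mul, sum_norm_sq_col_eq_one hG, one_mul]
  have hrow : ∀ b, ∑ a, ∑ i, ‖(Vᴴ * U) (a, b) i‖ ^ 2 * p i = r b := fun b => by
    have h1 : Wᴴ * ptraceLeft ρ * W = diagonal (fun i => (r i : ℂ)) := by
      calc _ = (Wᴴ * W) * diagonal (fun i => (r i : ℂ)) * (Wᴴ * W) := by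
              conv_lhs => rw [hρW]
              simp only [Matrix.mul_assoc]
        _ = _ := by rw [hW, Matrix.one_mul, Matrix.mul_one]
    have h2 := congrFun (congrFun ((ptraceLeft_conj_one_kronecker W ρ).trans h1) b) b
    rw [diagonal_apply_eq, ptraceLeft, of_apply] at h2
    have h3 := congrArg Complex.re h2
    rw [Complex.re_sum, Complex.ofReal_re] at h3
    simp only [sum_norm_sq_mul_eq, ← hρU]
    exact h3
  have hw : ∀ i j, 0 ≤ ‖(Vᴴ * U) j i‖ ^ 2 * p i := fun i j => mul_nonneg (sq_nonneg _) (hp i)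
  refine ⟨U, V, p, fun x => r x.2, hU, hV, hp, fun x => hr x.2, hρU, ?_, ?_, ?_, ?_⟩
  · have hdiag : diagonal (fun j : A × B => ((r j.2 : ℝ) : ℂ)) =
        (1 : Matrix A A ℂ) ⊗ₖ diagonal (fun i => (r i : ℂ)) := by
      rw [← diagonal_one, diagonal_kronecker_diagonal]
      simp
    conv_lhs => rw [hρW]
    rw [hdiag, hVdef, conjTranspose_kronecker, ← mul_kronecker_mul, ← mul_kronecker_mul]
    simp
  · rintro i ⟨a, b⟩ hb
    have h := hrow b
    rw [show r b = 0 from hb, Finset.sum_eq_zero_iff_of_nonneg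
      (fun a _ => Finset.sum_nonneg fun i _ => hw i (a, b))] at h
    have h' := h a (Finset.mem_univ a)
    rw [Finset.sum_eq_zero_iff_of_nonneg (fun i _ => hw i (a, b))] at h'
    exact h' i (Finset.mem_univ i)
  · simp only [hcol]
    conv_rhs => rw [hρU, trace_mul_comm, ← Matrix.mul_assoc, hU, Matrix.one_mul, trace_diagonal,
      Complex.re_sum]
    simp
  · simp only [mul_sub, Finset.sum_sub_distrib]
    have h1 : ∑ i, ∑ j, ‖(Vᴴ * U) j i‖ ^ 2 * p i * Real.log (p i) = - vnEntropy ρ := by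
      rw [hS, ← Finset.sum_neg_distrib]
      refine Finset.sum_congr rfl fun i _ => ?_
      rw [← Finset.sum_mul, hcol, Real.negMulLog]
      ring
    have h2 : ∑ i, ∑ j : A × B, ‖(Vᴴ * U) j i‖ ^ 2 * p i * Real.log (r j.2) =
        - vnEntropy (ptraceLeft ρ) := by
      rw [hSB, ← Finset.sum_neg_distrib, Finset.sum_comm, Fintype.sum_prod_type_right]
      refine Finset.sum_congr rfl fun b _ => ?_
      simp only [← Finset.sum_mul]
      rw [hrow, Real.negMulLog]
      ring
    rw [h1, h2]
    ring

lemma krausMap_posSemidef {κ m n : Type*} [Fintype κ] [Fintype m] [Fintype n]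
    (L : κ → Matrix m n ℂ) {X : Matrix n n ℂ} (hX : X.PosSemidef) :
    (krausMap L X).PosSemidef :=
  posSemidef_sum _ fun k _ => hX.mul_mul_conjTranspose_same (L k)

lemma trace_krausMap {κ m n : Type*} [Fintype κ] [Fintype m] [Fintype n] [DecidableEq n]
    (L : κ → Matrix m n ℂ) (hL : ∑ k, (L k)ᴴ * L k = 1) (X : Matrix n n ℂ) :
    (krausMap L X).trace = X.trace := by
  classical
  have h := trace_krausAdjoint_mul L 1 X
  rw [Matrix.one_mul] at h
  rw [← h, krausAdjoint]
  simp [hL]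

/-- Monotonicity under Kraus maps of the relative entropy of `ρ` with respect to `1 ⊗ ρ_B`. -/
lemma vnEntropy_sub_krausMap_le {κ A B B' : Type*} [Fintype κ] [Fintype A] [DecidableEq A]
    [Fintype B] [DecidableEq B] [Fintype B'] [DecidableEq B']
    (L : κ → Matrix (A × B') (A × B) ℂ) (hL : ∑ k, (L k)ᴴ * L k = 1)
    {ρ : Matrix (A × B) (A × B) ℂ} (hρ : ρ.PosSemidef)
    (hσ : krausMap L ((1 : Matrix A A ℂ) ⊗ₖ ptraceLeft ρ) =
      (1 : Matrix A A ℂ) ⊗ₖ ptraceLeft (krausMap L ρ)) :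
    vnEntropy (ptraceLeft (krausMap L ρ)) - vnEntropy (krausMap L ρ) ≤
      vnEntropy (ptraceLeft ρ) - vnEntropy ρ := by
  obtain ⟨U, V, p, q, hU, hV, hp, hq, hρU, hσV, hsupp, htr, hent⟩ := exists_spectral_pair hρ
  obtain ⟨U', V', p', q', hU', hV', hp', hq', hρU', hσV', hsupp', htr', hent'⟩ :=
    exists_spectral_pair (krausMap_posSemidef L hρ)
  have hσpos : ((1 : Matrix A A ℂ) ⊗ₖ ptraceLeft ρ).PosSemidef :=
    PosSemidef.one.kronecker (ptraceLeft_posSemidef hρ)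
  rw [← hent, ← hent']
  simp only [← Fintype.sum_prod_type'] at htr htr' ⊢
  refine sum_mul_log_sub_le_of_resolvent_le _ _ _ _ _ _ (fun x => hp x.1) (fun x => hq x.2)
    (fun x hx => by simp [hx]) (fun x hx => hsupp _ _ hx) (fun x => hp' x.1) (fun x => hq' x.2)
    (fun x hx => by simp [hx]) (fun x hx => hsupp' _ _ hx) ?_ fun t ht => ?_
  · rw [htr, htr', trace_krausMap L hL]
  · obtain ⟨Y, hY⟩ := exists_resolventFunctional_eq U' V' p' q' hU' hV' hp' hq' ht
    have hX := resolventFunctional_le U V (krausAdjoint L Y) p q hU hV hp hq ht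
    rw [← hρU', ← hσV', ← hσ] at hY
    rw [← hρU, ← hσV] at hX
    simp only [← Fintype.sum_prod_type'] at hX hY
    rw [← hY]
    exact (resolventFunctional_krausMap_le L hL hρ hσpos ht.le Y).trans hX

/-- **Choi–Kraus theorem** for trace-preserving completely positive maps. -/
lemma IsCPTP.exists_kraus {A B : Type*} [Fintype A] [DecidableEq A] [Fintype B]
    {Φ : Matrix A A ℂ →ₗ[ℂ] Matrix B B ℂ} (hΦ : IsCPTP Φ) :
    ∃ K : Fin (Fintype.card A) × B → Matrix B A ℂ,
      (∀ X, Φ X = krausMap K X) ∧ ∑ k, (K k)ᴴ * K k = 1 := by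
  obtain ⟨hcp, htp⟩ := hΦ
  set e := Fintype.equivFin A
  let v : Fin (Fintype.card A) × A → ℂ := fun x => if x.1 = e x.2 then 1 else 0
  obtain ⟨C, hC⟩ := PosSemidef.exists_eq_conjTranspose_mul_self
    (hcp _ _ (posSemidef_vecMulVec_self_star v))
  let K : Fin (Fintype.card A) × B → Matrix B A ℂ :=
    fun s => Matrix.of fun x a => star (C s (e a, x))
  have hsingle : ∀ a b, Φ (single a b 1) = krausMap K (single a b 1) := by
    intro a b
    ext x y
    have h := congrFun (congrFun hC (e a, x)) (e b, y)
    rw [idTensor, of_apply] at h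
    have hmat : (Matrix.of fun a' b' => vecMulVec v (star v) (e a, a') (e b, b')) =
        single a b (1 : ℂ) := by
      ext a' b'
      simp only [of_apply, vecMulVec_apply, v, Pi.star_apply, single_apply,
        EmbeddingLike.apply_eq_iff_eq]
      by_cases h1 : a = a' <;> by_cases h2 : b = b' <;> simp [h1, h2]
    simp only [hmat] at h
    rw [h, krausMap, Matrix.sum_apply, Matrix.mul_apply]
    refine Finset.sum_congr rfl fun s _ => ?_
    simp [Matrix.mul_apply, single_apply, K, ite_and]
  have hK : ∀ X, Φ X = krausMap K X := by
    intro X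
    let Ψ : Matrix A A ℂ →ₗ[ℂ] Matrix B B ℂ :=
      { toFun := krausMap K
        map_add' := fun X Y => by
          simp [krausMap, Matrix.mul_add, Matrix.add_mul, Finset.sum_add_distrib]
        map_smul' := fun c X => by simp [krausMap, Finset.smul_sum] }
    have : Φ = Ψ := by
      refine Matrix.ext_linearMap _ fun a b => LinearMap.ext_ring ?_
      exact hsingle a b
    exact congrArg (fun F => F X) this
  refine ⟨K, hK, ?_⟩
  classical
  refine ext_iff_trace_mul_right.2 fun X => ?_
  have h := trace_krausAdjoint_mul K 1 X
  rw [Matrix.one_mul, ← hK, htp, krausAdjoint] at h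
  simpa using h

lemma idTensor_krausMap {κ A B n : Type*} [Fintype κ] [Fintype A] [Fintype n] [DecidableEq n]
    {Φ : Matrix A A ℂ →ₗ[ℂ] Matrix B B ℂ} (K : κ → Matrix B A ℂ)
    (hK : ∀ X, Φ X = krausMap K X) (M : Matrix (n × A) (n × A) ℂ) :
    idTensor n Φ M = krausMap (fun k => (1 : Matrix n n ℂ) ⊗ₖ K k) M := by
  ext ⟨i, x⟩ ⟨j, y⟩
  simp only [idTensor, of_apply, hK, krausMap, Matrix.sum_apply, Matrix.mul_apply,
    conjTranspose_apply, kroneckerMap_apply, Fintype.sum_prod_type, one_apply, ite_mul, one_mul,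
    zero_mul, mul_ite, mul_zero, apply_ite star, star_zero, Finset.sum_ite_irrel,
    Finset.sum_const_zero, Finset.sum_ite_eq, Finset.mem_univ, if_true]

lemma idTensor_one_kronecker {A B n : Type*} [DecidableEq n]
    (Φ : Matrix A A ℂ →ₗ[ℂ] Matrix B B ℂ) (X : Matrix A A ℂ) :
    idTensor n Φ ((1 : Matrix n n ℂ) ⊗ₖ X) = (1 : Matrix n n ℂ) ⊗ₖ Φ X := by
  ext ⟨i, x⟩ ⟨j, y⟩
  have : (Matrix.of fun a b => ((1 : Matrix n n ℂ) ⊗ₖ X) (i, a) (j, b)) =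
      (1 : Matrix n n ℂ) i j • X := by
    ext a b
    simp
  simp only [idTensor, of_apply, this, map_smul]
  simp

lemma ptraceLeft_idTensor {A B n : Type*} [Fintype n]
    (Φ : Matrix A A ℂ →ₗ[ℂ] Matrix B B ℂ) (M : Matrix (n × A) (n × A) ℂ) :
    ptraceLeft (idTensor n Φ M) = Φ (ptraceLeft M) := by
  have : ptraceLeft M = ∑ i, Matrix.of fun a b => M (i, a) (i, b) := by
    ext a b
    simp [ptraceLeft, Matrix.sum_apply]
  rw [this, map_sum]
  ext x y
  simp [Matrix.sum_apply, ptraceLeft, idTensor]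

lemma ptraceRight_idTensor {A B n : Type*} [Fintype A] [Fintype B]
    {Φ : Matrix A A ℂ →ₗ[ℂ] Matrix B B ℂ} (hΦ : ∀ X, (Φ X).trace = X.trace)
    (M : Matrix (n × A) (n × A) ℂ) :
    ptraceRight (idTensor n Φ M) = ptraceRight M := by
  ext i j
  exact hΦ (Matrix.of fun a b => M (i, a) (j, b))

/-- Quantum data-processing inequality: local CPTP post-processing
cannot increase the quantum mutual information with a reference. -/
theorem stmt3 {R Q Q' : Type} [Fintype R] [DecidableEq R] [Fintype Q] [DecidableEq Q]
    [Fintype Q'] [DecidableEq Q']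
    (ρ : Matrix (R × Q) (R × Q) ℂ) (hρ : IsState ρ)
    (ℰ : Matrix Q Q ℂ →ₗ[ℂ] Matrix Q' Q' ℂ) (hℰ : IsCPTP ℰ) :
    mutualInfo (idTensor R ℰ ρ) ≤ mutualInfo ρ := by
  obtain ⟨K, hK, hK1⟩ := hℰ.exists_kraus
  have hL : ∑ k, ((1 : Matrix R R ℂ) ⊗ₖ K k)ᴴ * ((1 : Matrix R R ℂ) ⊗ₖ K k) = 1 := by
    simp only [conjTranspose_kronecker, ← mul_kronecker_mul, conjTranspose_one, Matrix.one_mul]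
    rw [← one_kronecker_one, ← hK1]
    ext ⟨i, x⟩ ⟨j, y⟩
    simp [Matrix.sum_apply, Finset.mul_sum]
  have h := vnEntropy_sub_krausMap_le _ hL hρ.1 (by
    rw [← idTensor_krausMap K hK, ← idTensor_krausMap K hK, idTensor_one_kronecker,
      ptraceLeft_idTensor])
  rw [← idTensor_krausMap K hK] at h
  rw [mutualInfo, mutualInfo, ptraceRight_idTensor hℰ.2]
  linarith
end
end

section
/- Let ρ_RQE = Σ_{x∈X} q_x ω^x_R ⊗ ζ^x_{QE} be a state on H_R⊗H_Q⊗H_E, where X is a finite index set, (q_x) is a probability vector, each ω^x_R is a state on H_R, each ζ^x_{QE} is a state on H_Q⊗H_E, and there exist mutually orthogonal projectors {P^x}_{x∈X} on H_Q such that (P^x⊗1_E) ζ^x_{QE} (P^x⊗1_E) = ζ^x_{QE} for each x. Then I(R;E|Q)_ρ = 0. -/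
open Matrix Kronecker ComplexOrder

noncomputable section

/-- The entropy of a Hermitian matrix as a sum over the roots of its characteristic polynomial. -/
theorem vnEntropy_eq_sum_roots_charpoly {n : Type*} [Fintype n] [DecidableEq n]
    {A : Matrix n n ℂ} (hA : A.IsHermitian) :
    vnEntropy A = (A.charpoly.roots.map fun z => Real.negMulLog z.re).sum := by
  rw [vnEntropy, dif_pos hA, hA.roots_charpoly_eq_eigenvalues, Multiset.map_map]
  simp only [Function.comp_def, RCLike.ofReal_eq_complex_ofReal, Complex.ofReal_re]
  rfl

theorem vnEntropy_zero {n : Type*} [Fintype n] [DecidableEq n] :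
    vnEntropy (0 : Matrix n n ℂ) = 0 := by
  rw [vnEntropy_eq_sum_roots_charpoly Matrix.isHermitian_zero, Matrix.charpoly_zero,
    Polynomial.roots_X_pow, Multiset.map_nsmul, Multiset.sum_nsmul]
  simp

open Polynomial in
theorem charpoly_mul_charpoly_of_mul_eq_zero {S n : Type*} [CommRing S] [Fintype n]
    [DecidableEq n] {A B : Matrix n n S} (h : A * B = 0) :
    A.charpoly * B.charpoly = X ^ Fintype.card n * (A + B).charpoly := by
  have hC : C.mapMatrix A * C.mapMatrix B = (0 : Matrix n n S[X]) := by
    rw [← map_mul, h, map_zero]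
  have hmul : A.charmatrix * B.charmatrix = (X : S[X]) • (A + B).charmatrix := by
    simp only [Matrix.charmatrix, map_add, sub_mul, mul_sub, hC, Matrix.scalar_apply,
      ← Matrix.smul_one_eq_diagonal, smul_mul_assoc, mul_smul_comm, one_mul, mul_one, smul_sub,
      smul_add]
    abel
  rw [Matrix.charpoly, Matrix.charpoly, ← Matrix.det_mul, hmul, Matrix.det_smul, Matrix.charpoly]

/-- The entropy is additive on orthogonal Hermitian matrices. -/
theorem vnEntropy_add_of_mul_eq_zero {n : Type*} [Fintype n] [DecidableEq n]
    {A B : Matrix n n ℂ} (hA : A.IsHermitian) (hB : B.IsHermitian) (h : A * B = 0) :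
    vnEntropy (A + B) = vnEntropy A + vnEntropy B := by
  have hroots := congrArg Polynomial.roots (charpoly_mul_charpoly_of_mul_eq_zero h)
  rw [Polynomial.roots_mul (mul_ne_zero A.charpoly_monic.ne_zero B.charpoly_monic.ne_zero),
    Polynomial.roots_mul (mul_ne_zero (pow_ne_zero _ Polynomial.X_ne_zero)
      (A + B).charpoly_monic.ne_zero), Polynomial.roots_X_pow] at hroots
  have hsum := congrArg (fun s => (s.map fun z : ℂ => Real.negMulLog z.re).sum) hroots
  simp only [Multiset.map_add, Multiset.sum_add, Multiset.map_nsmul, Multiset.sum_nsmul,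
    Multiset.map_singleton, Multiset.sum_singleton, Complex.zero_re, Real.negMulLog_zero,
    smul_zero, zero_add] at hsum
  rw [vnEntropy_eq_sum_roots_charpoly hA, vnEntropy_eq_sum_roots_charpoly hB,
    vnEntropy_eq_sum_roots_charpoly (hA.add hB), hsum]

theorem vnEntropy_sum_of_pairwise_mul_eq_zero {ι n : Type*} [Fintype n] [DecidableEq n]
    (s : Finset ι) {A : ι → Matrix n n ℂ} (hA : ∀ i, (A i).IsHermitian)
    (h : ∀ i j, i ≠ j → A i * A j = 0) :
    vnEntropy (∑ i ∈ s, A i) = ∑ i ∈ s, vnEntropy (A i) := by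
  classical
  induction s using Finset.induction_on with
  | empty => simp [vnEntropy_zero]
  | insert i s hi ih =>
    have hs : (∑ j ∈ s, A j).IsHermitian := by
      simp only [Matrix.IsHermitian, Matrix.conjTranspose_sum, (hA _).eq]
    have hmul : A i * ∑ j ∈ s, A j = 0 := by
      rw [Finset.mul_sum]
      exact Finset.sum_eq_zero fun j hj => h i j fun hij => hi (hij ▸ hj)
    rw [Finset.sum_insert hi, Finset.sum_insert hi,
      vnEntropy_add_of_mul_eq_zero (hA i) hs hmul, ih]

theorem isHermitian_kronecker {m n : Type*} {A : Matrix m m ℂ} {B : Matrix n n ℂ}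
    (hA : A.IsHermitian) (hB : B.IsHermitian) : (A ⊗ₖ B).IsHermitian := by
  rw [Matrix.IsHermitian, Matrix.conjTranspose_kronecker, hA.eq, hB.eq]

open Polynomial in
/-- The eigenvalues of a Kronecker product are the pairwise products of the eigenvalues. -/
theorem charpoly_kronecker_of_isHermitian {m n : Type*} [Fintype m] [DecidableEq m] [Fintype n]
    [DecidableEq n] {A : Matrix m m ℂ} {B : Matrix n n ℂ} (hA : A.IsHermitian)
    (hB : B.IsHermitian) :
    (A ⊗ₖ B).charpoly =
      ∏ p : m × n, (X - C ((hA.eigenvalues p.1 * hB.eigenvalues p.2 : ℝ) : ℂ)) := by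
  conv_lhs => rw [hA.spectral_theorem, hB.spectral_theorem, Unitary.conjStarAlgAut_apply,
    Unitary.conjStarAlgAut_apply, Matrix.mul_kronecker_mul, Matrix.charpoly_mul_comm,
    ← Matrix.mul_kronecker_mul, ← mul_assoc, ← mul_assoc,
    Unitary.coe_star_mul_self, Unitary.coe_star_mul_self, one_mul, one_mul,
    Matrix.diagonal_kronecker_diagonal, Matrix.charpoly_diagonal]
  simp

theorem vnEntropy_kronecker {m n : Type*} [Fintype m] [DecidableEq m] [Fintype n]
    [DecidableEq n] {A : Matrix m m ℂ} {B : Matrix n n ℂ} (hA : A.IsHermitian)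
    (hB : B.IsHermitian) :
    vnEntropy (A ⊗ₖ B) = B.trace.re * vnEntropy A + A.trace.re * vnEntropy B := by
  rw [vnEntropy_eq_sum_roots_charpoly (isHermitian_kronecker hA hB),
    charpoly_kronecker_of_isHermitian hA hB,
    Polynomial.roots_prod _ _ (Finset.prod_ne_zero_iff.mpr fun _ _ =>
      Polynomial.X_sub_C_ne_zero _)]
  simp only [Polynomial.roots_X_sub_C, Multiset.bind_singleton, Multiset.map_map,
    Function.comp_def, Complex.ofReal_re, Real.negMulLog_mul]
  change ∑ p : m × n, _ = _
  rw [vnEntropy, dif_pos hA, vnEntropy, dif_pos hB, hA.trace_eq_sum_eigenvalues,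
    hB.trace_eq_sum_eigenvalues, Finset.sum_add_distrib, Fintype.sum_prod_type,
    Fintype.sum_prod_type]
  simp [← Finset.sum_mul, ← Finset.mul_sum]

theorem isHermitian_ptraceRight {A B : Type*} [Fintype B] {M : Matrix (A × B) (A × B) ℂ}
    (hM : M.IsHermitian) : (ptraceRight M).IsHermitian := by
  ext i j
  simp [ptraceRight, hM.apply]

theorem trace_ptraceRight {A B : Type*} [Fintype A] [Fintype B] (M : Matrix (A × B) (A × B) ℂ) :
    (ptraceRight M).trace = M.trace := by
  simp [ptraceRight, Matrix.trace, Fintype.sum_prod_type]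

theorem ptraceRight_kronecker_one_mul {A B : Type*} [Fintype A] [Fintype B] [DecidableEq B]
    (P : Matrix A A ℂ) (M : Matrix (A × B) (A × B) ℂ) :
    ptraceRight ((P ⊗ₖ (1 : Matrix B B ℂ)) * M) = P * ptraceRight M := by
  ext i j
  simp only [ptraceRight, Matrix.of_apply, Matrix.mul_apply, Matrix.kroneckerMap_apply,
    Fintype.sum_prod_type, Matrix.one_apply, mul_ite, mul_one, mul_zero, ite_mul, zero_mul,
    Finset.sum_ite_eq, Finset.mem_univ, if_true, Finset.mul_sum]
  exact Finset.sum_comm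

theorem ptraceRight_mul_kronecker_one {A B : Type*} [Fintype A] [Fintype B] [DecidableEq B]
    (P : Matrix A A ℂ) (M : Matrix (A × B) (A × B) ℂ) :
    ptraceRight (M * (P ⊗ₖ (1 : Matrix B B ℂ))) = ptraceRight M * P := by
  ext i j
  simp only [ptraceRight, Matrix.of_apply, Matrix.mul_apply, Matrix.kroneckerMap_apply,
    Fintype.sum_prod_type, Matrix.one_apply, mul_ite, mul_one, mul_zero,
    Finset.sum_ite_eq', Finset.mem_univ, if_true, Finset.sum_mul]
  exact Finset.sum_comm

theorem ptraceLeft_sum_kronecker {A B ι : Type*} [Fintype A] [Fintype ι] (M : ι → Matrix A A ℂ)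
    (N : ι → Matrix B B ℂ) :
    ptraceLeft (∑ x, M x ⊗ₖ N x) = ∑ x, (M x).trace • N x := by
  ext i j
  simp only [ptraceLeft, Matrix.of_apply, Matrix.sum_apply, Matrix.kroneckerMap_apply,
    Matrix.smul_apply, Matrix.trace, Matrix.diag_apply, smul_eq_mul, Finset.sum_mul]
  exact Finset.sum_comm

theorem ptrace3E_sum_kronecker {R Q E ι : Type*} [Fintype E] [Fintype ι]
    (M : ι → Matrix R R ℂ) (N : ι → Matrix (Q × E) (Q × E) ℂ) :
    ptrace3E (∑ x, M x ⊗ₖ N x) = ∑ x, M x ⊗ₖ ptraceRight (N x) := by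
  ext i j
  simp only [ptrace3E, ptraceRight, Matrix.of_apply, Matrix.sum_apply,
    Matrix.kroneckerMap_apply, Finset.mul_sum]
  exact Finset.sum_comm

theorem mul_eq_zero_of_orthogonal_supports {S : Type*} [Semiring S] {P P' M M' : S}
    (hP : P * P' = 0) (hM : P * M * P = M) (hM' : P' * M' * P' = M') : M * M' = 0 := by
  rw [← hM, ← hM', mul_assoc (P * M), ← mul_assoc P, ← mul_assoc P, hP]
  simp

theorem vnEntropy_sum_kronecker {m n ι : Type*} [Fintype m] [DecidableEq m] [Fintype n]
    [DecidableEq n] [Fintype ι] {M : ι → Matrix m m ℂ} {N : ι → Matrix n n ℂ}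
    (hM : ∀ i, (M i).IsHermitian) (hN : ∀ i, (N i).IsHermitian) (hM1 : ∀ i, (M i).trace = 1)
    (h : ∀ i j, i ≠ j → N i * N j = 0) :
    vnEntropy (∑ i, M i ⊗ₖ N i) =
      ∑ i, (N i).trace.re * vnEntropy (M i) + vnEntropy (∑ i, N i) := by
  rw [vnEntropy_sum_of_pairwise_mul_eq_zero _ (fun i => isHermitian_kronecker (hM i) (hN i))
      fun i j hij => by rw [← Matrix.mul_kronecker_mul, h i j hij, Matrix.kronecker_zero],
    vnEntropy_sum_of_pairwise_mul_eq_zero _ hN h, ← Finset.sum_add_distrib]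
  exact Finset.sum_congr rfl fun i _ => by simp [vnEntropy_kronecker (hM i) (hN i), hM1 i]

/-- A state of the form `ρ_RQE = Σ_x q_x ω^x_R ⊗ ζ^x_QE`, where the
`ζ^x_QE` are supported on mutually orthogonal projectors `P^x` on `Q`, satisfies
`I(R;E|Q)_ρ = 0`. -/
theorem stmt9 {R Q E X : Type} [Fintype R] [DecidableEq R] [Fintype Q] [DecidableEq Q]
    [Fintype E] [DecidableEq E] [Fintype X]
    (q : X → ℝ) (hq0 : ∀ x, 0 ≤ q x) (hq1 : ∑ x, q x = 1)
    (ω : X → Matrix R R ℂ) (hω : ∀ x, IsState (ω x))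
    (ζ : X → Matrix (Q × E) (Q × E) ℂ) (hζ : ∀ x, IsState (ζ x))
    (P : X → Matrix Q Q ℂ)
    (hProj : ∀ x, (P x).IsHermitian ∧ P x * P x = P x)
    (hOrth : ∀ x y, x ≠ y → P x * P y = 0)
    (hSupp : ∀ x, (P x ⊗ₖ (1 : Matrix E E ℂ)) * ζ x * (P x ⊗ₖ (1 : Matrix E E ℂ)) = ζ x) :
    condMutualInfo (∑ x, (q x : ℂ) • (ω x ⊗ₖ ζ x)) = 0 := by
  set N : X → Matrix (Q × E) (Q × E) ℂ := fun x => (q x : ℂ) • ζ x with hNdef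
  have hρ : ∑ x, (q x : ℂ) • (ω x ⊗ₖ ζ x) = ∑ x, ω x ⊗ₖ N x := by
    simp only [hNdef, Matrix.kronecker_smul]
  have hωH x : (ω x).IsHermitian := (hω x).1.1
  have hω1 x : (ω x).trace = 1 := (hω x).2
  have hNH x : (N x).IsHermitian := by
    simp only [hNdef, Matrix.IsHermitian, Matrix.conjTranspose_smul, (hζ x).1.1.eq,
      Complex.star_def, Complex.conj_ofReal]
  have hNsupp x : (P x ⊗ₖ (1 : Matrix E E ℂ)) * N x * (P x ⊗ₖ (1 : Matrix E E ℂ)) = N x := by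
    simp only [hNdef, Matrix.mul_smul, Matrix.smul_mul, hSupp x]
  have hQsupp x : P x * ptraceRight (N x) * P x = ptraceRight (N x) := by
    rw [← ptraceRight_kronecker_one_mul, ← ptraceRight_mul_kronecker_one, hNsupp x]
  have hN0 x y (hxy : x ≠ y) : N x * N y = 0 :=
    mul_eq_zero_of_orthogonal_supports
      (by rw [← Matrix.mul_kronecker_mul, hOrth x y hxy, Matrix.zero_kronecker])
      (hNsupp x) (hNsupp y)
  have hQ0 x y (hxy : x ≠ y) : ptraceRight (N x) * ptraceRight (N y) = 0 :=
    mul_eq_zero_of_orthogonal_supports (hOrth x y hxy) (hQsupp x) (hQsupp y)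
  rw [hρ, condMutualInfo, ptrace3E_sum_kronecker, ptraceLeft_sum_kronecker,
    ptraceLeft_sum_kronecker, vnEntropy_sum_kronecker hωH hNH hω1 hN0,
    vnEntropy_sum_kronecker hωH (fun x => isHermitian_ptraceRight (hNH x)) hω1 hQ0]
  simp only [hω1, one_smul, trace_ptraceRight]
  ring
end
end

section
/- Let 𝒮 be a post-selected family of states on H_Q⊗H_E, realized by a nonzero completely positive linear map 𝒫 : L(H_{Q0}⊗H_{E0}) → L(H_Q⊗H_E). Let H_R ≅ H_{Q0}⊗H_{E0}, let |Φ⁺⟩ ∈ H_R⊗(H_{Q0}⊗H_{E0}) be a maximally entangled state, and set ρ_RQE := k (id_R⊗𝒫)(|Φ⁺⟩⟨Φ⁺|), where k > 0 is the normalization constant making ρ_RQE a state. Then the steered family of ρ_RQE equals 𝒮, i.e., 𝒮_QE(ρ_RQE) = 𝒮. -/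
open Matrix Kronecker ComplexOrder

noncomputable section

/-- Measuring `P` on the reference of `c (id ⊗ Φ)(|v⟩⟨v|)` amounts to applying `Φ` to
`N Pᵀ Nᴴ`, where `N` is the matrix of coefficients of `v`. -/
lemma ptraceLeft_kronecker_mul_idTensor_vecMulVec {R A B : Type*} [Fintype R] [Fintype A]
    [Fintype B] [DecidableEq B] (Φ : Matrix A A ℂ →ₗ[ℂ] Matrix B B ℂ) (v : R × A → ℂ)
    (c : ℂ) (P : Matrix R R ℂ) (N : Matrix A R ℂ) (hN : ∀ a r, N a r = v (r, a)) :
    ptraceLeft ((P ⊗ₖ (1 : Matrix B B ℂ)) * (c • idTensor R Φ (vecMulVec v (star v)))) =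
      c • Φ (N * Pᵀ * Nᴴ) := by
  have hsum : N * Pᵀ * Nᴴ = ∑ r, ∑ r', P r r' •
      Matrix.of fun a b => vecMulVec v (star v) (r', a) (r, b) := by
    ext a b
    simp only [mul_apply, Finset.sum_mul, Matrix.sum_apply, Matrix.smul_apply, of_apply, vecMulVec_apply,
      transpose_apply, conjTranspose_apply, hN, Pi.star_apply, smul_eq_mul]
    exact Finset.sum_congr rfl fun r _ => Finset.sum_congr rfl fun r' _ => by ring
  ext x y
  rw [hsum]
  simp only [map_sum, map_smul, ptraceLeft, idTensor, of_apply, mul_apply, kroneckerMap_apply,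
    Fintype.sum_prod_type, one_apply, mul_ite, mul_one, mul_zero, ite_mul, zero_mul,
    Finset.sum_ite_eq, Finset.mem_univ, if_true, Matrix.smul_apply, Matrix.sum_apply, smul_eq_mul,
    Finset.mul_sum]
  exact Finset.sum_congr rfl fun r _ => Finset.sum_congr rfl fun r' _ => by ring

/-- Orthonormal rows form a unitary matrix. -/
lemma mul_conjTranspose_eq_one_of_orthonormal {n : Type*} [Fintype n] [DecidableEq n]
    (e : n → n → ℂ) (he : ∀ i j, star (e i) ⬝ᵥ e j = if i = j then 1 else 0) :
    Matrix.of e * (Matrix.of e)ᴴ = 1 := by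
  ext i j
  simp only [one_apply, eq_comm (a := i), ← he j i, dotProduct_comm (star (e j))]
  rfl

/-- The coefficient matrix of `∑ i, e i ⊗ f i` is unitary for orthonormal bases `e` and `f`. -/
lemma transpose_mul_mul_conjTranspose_eq_one_of_orthonormal {n : Type*} [Fintype n] [DecidableEq n]
    (e f : n → n → ℂ) (he : ∀ i j, star (e i) ⬝ᵥ e j = if i = j then 1 else 0)
    (hf : ∀ i j, star (f i) ⬝ᵥ f j = if i = j then 1 else 0) :
    ((Matrix.of f)ᵀ * Matrix.of e) * ((Matrix.of f)ᵀ * Matrix.of e)ᴴ = 1 := by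
  have hE := mul_conjTranspose_eq_one_of_orthonormal e he
  have hF := mul_eq_one_comm.mp (mul_conjTranspose_eq_one_of_orthonormal f hf)
  rw [conjTranspose_mul, Matrix.mul_assoc, ← Matrix.mul_assoc (Matrix.of e), hE, Matrix.one_mul,
    show (Matrix.of f)ᵀᴴ = (Matrix.of f)ᴴᵀ from rfl, ← transpose_mul, hF, transpose_one]

/-- Rescaling an operator does not change its normalization to unit trace. -/
lemma inv_trace_smul_smul {n : Type*} [Fintype n] (c : ℂ) (hc : c ≠ 0) (M : Matrix n n ℂ) :
    ((c • M).trace)⁻¹ • (c • M) = M.trace⁻¹ • M := by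
  rw [trace_smul, smul_eq_mul, smul_smul, mul_inv, mul_right_comm, inv_mul_cancel₀ hc, one_mul]

/-- If the coefficient matrix of `v` is a nonzero multiple of a unitary, the states steered from
`c (id ⊗ Φ)(|v⟩⟨v|)` are the normalized outputs of `Φ`. -/
lemma steered_smul_idTensor_vecMulVec {R A Q E : Type*} [Fintype R] [Fintype A] [DecidableEq A]
    [Fintype Q] [DecidableEq Q] [Fintype E] [DecidableEq E]
    (Φ : Matrix A A ℂ →ₗ[ℂ] Matrix (Q × E) (Q × E) ℂ) (v : R × A → ℂ)
    (c : ℂ) (hc : c ≠ 0) (N : Matrix A R ℂ) (hN : ∀ a r, N a r = v (r, a))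
    (s : ℂ) (hs : Nonempty A → s ≠ 0) (hNN : N * Nᴴ = s • 1) :
    steered (c • idTensor R Φ (vecMulVec v (star v))) =
      { ω | ∃ ρ0, IsState ρ0 ∧ (Φ ρ0).trace ≠ 0 ∧ ω = ((Φ ρ0).trace)⁻¹ • Φ ρ0 } := by
  ext ω
  simp only [steered, Set.mem_ofPred_eq,
    ptraceLeft_kronecker_mul_idTensor_vecMulVec Φ v c _ N hN, inv_trace_smul_smul c hc]
  constructor
  · rintro ⟨P, hP, htr, rfl⟩
    have hX : (N * Pᵀ * Nᴴ).PosSemidef := hP.transpose.mul_mul_conjTranspose_same N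
    generalize N * Pᵀ * Nᴴ = X at hX htr
    have ht : X.trace ≠ 0 := fun h => by
      rw [hX.trace_eq_zero_iff.mp h] at htr
      simp at htr
    refine ⟨X.trace⁻¹ • X, ⟨hX.smul (inv_nonneg.mpr hX.trace_nonneg), ?_⟩, ?_, ?_⟩
    · rw [trace_smul, smul_eq_mul, inv_mul_cancel₀ ht]
    · rw [map_smul, trace_smul]
      rw [trace_smul] at htr
      exact smul_ne_zero (inv_ne_zero ht) (right_ne_zero_of_smul htr)
    · rw [map_smul, inv_trace_smul_smul _ (inv_ne_zero ht)]
  · rintro ⟨ρ, ⟨hρ, hρ1⟩, htr, rfl⟩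
    have hA : Nonempty A := by
      by_contra h
      rw [not_nonempty_iff] at h
      simp [trace] at hρ1
    have hss : s * s ≠ 0 := mul_ne_zero (hs hA) (hs hA)
    have hX : N * ((Nᴴ * ρ * N)ᵀ)ᵀ * Nᴴ = (s * s) • ρ := by
      rw [transpose_transpose, show N * (Nᴴ * ρ * N) * Nᴴ = (N * Nᴴ) * ρ * (N * Nᴴ) by
        simp only [Matrix.mul_assoc], hNN]
      simp [smul_smul]
    refine ⟨(Nᴴ * ρ * N)ᵀ, (hρ.conjTranspose_mul_mul_same N).transpose, ?_, ?_⟩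
    · rw [hX, map_smul, trace_smul, trace_smul]
      exact smul_ne_zero hc (smul_ne_zero hss htr)
    · rw [hX, map_smul, inv_trace_smul_smul _ hss]

/-- Let `S` be a post-selected family realized by a nonzero completely
positive map `Pm : Q₀E₀ → QE`, let `|Φ⁺⟩` be a maximally entangled state of
`R ⊗ (Q₀ ⊗ E₀)` with `R ≅ Q₀ ⊗ E₀`, and let `ρ_RQE = k (id_R ⊗ Pm)(|Φ⁺⟩⟨Φ⁺|)` be the
corresponding normalized state. Then the steered family of `ρ_RQE` equals `S`. -/
theorem stmt16 {Q0 E0 Q E : Type} [Fintype Q0] [DecidableEq Q0] [Fintype E0] [DecidableEq E0]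
    [Fintype Q] [DecidableEq Q] [Fintype E] [DecidableEq E]
    (Pm : Matrix (Q0 × E0) (Q0 × E0) ℂ →ₗ[ℂ] Matrix (Q × E) (Q × E) ℂ)
    (hPm : IsCPMap Pm) (hPmne : Pm ≠ 0)
    (S : Set (Matrix (Q × E) (Q × E) ℂ))
    (hS : S = { ω | ∃ ρ0, IsState ρ0 ∧ (Pm ρ0).trace ≠ 0 ∧ ω = ((Pm ρ0).trace)⁻¹ • Pm ρ0 })
    (e f : (Q0 × E0) → (Q0 × E0) → ℂ)
    (he : ∀ i j, star (e i) ⬝ᵥ e j = if i = j then 1 else 0)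
    (hf : ∀ i j, star (f i) ⬝ᵥ f j = if i = j then 1 else 0)
    (Φ : (Q0 × E0) × (Q0 × E0) → ℂ)
    (hΦ : Φ = fun x =>
      (((Real.sqrt (Fintype.card (Q0 × E0)) : ℝ) : ℂ))⁻¹ * ∑ i, e i x.1 * f i x.2)
    (k : ℝ) (hk : 0 < k)
    (hnorm : (((k : ℂ)) • idTensor (Q0 × E0) Pm (vecMulVec Φ (star Φ))).trace = 1) :
    steered (((k : ℂ)) • idTensor (Q0 × E0) Pm (vecMulVec Φ (star Φ))) = S := by
  set c : ℂ := (((Real.sqrt (Fintype.card (Q0 × E0)) : ℝ) : ℂ))⁻¹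
  rw [hS]
  refine steered_smul_idTensor_vecMulVec Pm Φ k (by exact_mod_cast hk.ne')
    (c • ((Matrix.of f)ᵀ * Matrix.of e)) (fun a r => ?_) (c * star c) (fun hne => ?_) ?_
  · simp only [hΦ, Matrix.smul_apply, mul_apply, transpose_apply, of_apply, smul_eq_mul, mul_comm]
  · have hd : Real.sqrt (Fintype.card (Q0 × E0)) ≠ 0 :=
      (Real.sqrt_pos.mpr (by exact_mod_cast Fintype.card_pos)).ne'
    have hc0 : c ≠ 0 := inv_ne_zero (by exact_mod_cast hd)
    exact mul_ne_zero hc0 (star_ne_zero.mpr hc0)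
  · rw [conjTranspose_smul, smul_mul_smul_comm,
      transpose_mul_mul_conjTranspose_eq_one_of_orthonormal e f he hf]
end
end
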